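/- Let G be a simple graph on n vertices with domination number γ, where 1 ≤ γ ≤ n−1, and suppose the signless Laplacian spectral radius of G equals 2(n − γ) (i.e., 2(n−γ) is an eigenvalue of Q(G)). If G_1 is a connected component of G containing at least one edge whose signless Laplacian spectral radius equals that of G, then G_1 is (n−γ)-regular, i.e., every vertex of G_1 has degree exactly n − γ. -/

import Mathlib

open SimpleGraph Matrix

/-- `S` is a dominating set of `G`: every vertex outside `S` has a neighbor in `S`. -/
def IsDominatingSet {V : Type*} (G : SimpleGraph V) (S : Set V) : Prop :=
  ∀ v : V, v ∉ S → ∃ u ∈ S, G.Adj u v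

/-- The domination number of a finite graph: the minimum cardinality of a dominating set. -/
noncomputable def dominationNumber {V : Type*} [Fintype V] (G : SimpleGraph V) : ℕ :=
  sInf {k : ℕ | ∃ S : Finset V, S.card = k ∧ IsDominatingSet G (S : Set V)}

open scoped Classical in
/-- The signless Laplacian matrix `D(G) + A(G)` of a simple graph. -/
noncomputable def signlessLapMatrix {V : Type*} [Fintype V] (G : SimpleGraph V) :
    Matrix V V ℝ :=
  G.degMatrix ℝ + G.adjMatrix ℝ

/-!
Since `Q = 2D - L`, where `L` is the Laplacian, an eigenvector `Q x = 2k x` satisfies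
`xᵀ L x = 2 ∑ v, (d v - k) x v ^ 2`. If all degrees are at most `k`, this forces `L x = 0`, as `L`
is positive semidefinite. Hence `x` is constant on connected components, and comparing the entries
of `2 D x = Q x = 2k x` gives `d v = k` wherever `x v ≠ 0`. The bound `d v ≤ n - γ` holds because
the vertices not adjacent to `v` form a dominating set.
-/

section Domination

variable {V : Type*}

theorem isDominatingSet_compl_neighborSet (G : SimpleGraph V) (v : V) :
    IsDominatingSet G (G.neighborSet v)ᶜ :=
  fun _ hu ↦ ⟨v, G.notMem_neighborSet_self, Set.notMem_compl_iff.mp hu⟩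

variable [Fintype V]

theorem IsDominatingSet.dominationNumber_le_card {G : SimpleGraph V} {S : Finset V}
    (hS : IsDominatingSet G S) : dominationNumber G ≤ S.card :=
  Nat.sInf_le ⟨S, rfl, hS⟩

theorem degree_add_dominationNumber_le_card (G : SimpleGraph V) (v : V)
    [Fintype (G.neighborSet v)] : G.degree v + dominationNumber G ≤ Fintype.card V := by
  classical
  have hdom : IsDominatingSet G ((G.neighborFinset v)ᶜ : Finset V) := by
    simpa only [Finset.coe_compl, coe_neighborFinset] using isDominatingSet_compl_neighborSet G v
  calc G.degree v + dominationNumber G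
      ≤ (G.neighborFinset v).card + (G.neighborFinset v)ᶜ.card :=
        Nat.add_le_add_left hdom.dominationNumber_le_card _
    _ = Fintype.card V := Finset.card_add_card_compl _

end Domination

section SignlessLaplacian

variable {V : Type*} [Fintype V] {G : SimpleGraph V} [DecidableRel G.Adj]

variable (G) in
theorem signlessLapMatrix_eq_degMatrix_add_adjMatrix [DecidableEq V] :
    signlessLapMatrix G = G.degMatrix ℝ + G.adjMatrix ℝ := by
  unfold signlessLapMatrix
  congr!

theorem signlessLapMatrix_mulVec_add_lapMatrix_mulVec [DecidableEq V] (x : V → ℝ) :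
    signlessLapMatrix G *ᵥ x + G.lapMatrix ℝ *ᵥ x = (2 : ℝ) • (G.degMatrix ℝ *ᵥ x) := by
  rw [← add_mulVec, ← smul_mulVec, signlessLapMatrix_eq_degMatrix_add_adjMatrix, lapMatrix,
    two_smul]
  congr 1
  abel

theorem dotProduct_mulVec_lapMatrix_of_signlessLapMatrix_mulVec_eq [DecidableEq V] {x : V → ℝ}
    {k : ℝ} (hx : signlessLapMatrix G *ᵥ x = (2 * k) • x) :
    x ⬝ᵥ (G.lapMatrix ℝ *ᵥ x) = 2 * ∑ v, (G.degree v - k) * x v ^ 2 := by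
  have hlap : G.lapMatrix ℝ *ᵥ x = (2 : ℝ) • (G.degMatrix ℝ *ᵥ x) - (2 * k) • x := by
    rw [← hx, ← signlessLapMatrix_mulVec_add_lapMatrix_mulVec, add_sub_cancel_left]
  rw [hlap, dotProduct, Finset.mul_sum]
  refine Finset.sum_congr rfl fun v _ ↦ ?_
  simp only [Pi.sub_apply, Pi.smul_apply, smul_eq_mul, degMatrix_mulVec_apply]
  ring

theorem lapMatrix_mulVec_eq_zero_of_signlessLapMatrix_mulVec_eq [DecidableEq V] {x : V → ℝ} {k : ℝ}
    (hdeg : ∀ v, (G.degree v : ℝ) ≤ k) (hx : signlessLapMatrix G *ᵥ x = (2 * k) • x) :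
    G.lapMatrix ℝ *ᵥ x = 0 := by
  have hpsd : (G.lapMatrix ℝ).PosSemidef := posSemidef_lapMatrix ℝ G
  have hnonpos : ∑ v, (G.degree v - k) * x v ^ 2 ≤ 0 := Finset.sum_nonpos fun v _ ↦
    mul_nonpos_of_nonpos_of_nonneg (sub_nonpos.mpr (hdeg v)) (sq_nonneg _)
  have hquad := dotProduct_mulVec_lapMatrix_of_signlessLapMatrix_mulVec_eq hx
  have hnonneg : 0 ≤ x ⬝ᵥ (G.lapMatrix ℝ *ᵥ x) := by
    simpa only [star_trivial] using hpsd.dotProduct_mulVec_nonneg x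
  rw [← hpsd.dotProduct_mulVec_zero_iff, star_trivial]
  linarith

theorem degree_eq_of_signlessLapMatrix_mulVec_eq {x : V → ℝ} {k : ℝ}
    (hdeg : ∀ v, (G.degree v : ℝ) ≤ k) (hx : signlessLapMatrix G *ᵥ x = (2 * k) • x)
    {v : V} (hv : x v ≠ 0) : (G.degree v : ℝ) = k := by
  classical
  have hentry := congrFun (signlessLapMatrix_mulVec_add_lapMatrix_mulVec (G := G) x) v
  rw [lapMatrix_mulVec_eq_zero_of_signlessLapMatrix_mulVec_eq hdeg hx, hx, add_zero, Pi.smul_apply,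
    Pi.smul_apply, degMatrix_mulVec_apply, smul_eq_mul, smul_eq_mul, mul_assoc] at hentry
  exact (mul_right_cancel₀ hv (mul_left_cancel₀ two_ne_zero hentry)).symm

theorem isRegularOfDegree_of_hasEigenvalue_signlessLapMatrix [DecidableEq V] {k : ℕ}
    (hG : G.Preconnected) (hdeg : ∀ v, G.degree v ≤ k)
    (heig : Module.End.HasEigenvalue (toLin' (signlessLapMatrix G)) (2 * (k : ℝ))) :
    G.IsRegularOfDegree k := by
  obtain ⟨x, hx⟩ := heig.exists_hasEigenvector
  have hQ : signlessLapMatrix G *ᵥ x = (2 * (k : ℝ)) • x := hx.apply_eq_smul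
  have hdeg' : ∀ v, (G.degree v : ℝ) ≤ k := fun v ↦ Nat.cast_le.mpr (hdeg v)
  have hconst := (lapMatrix_mulVec_eq_zero_iff_forall_reachable G).mp
    (lapMatrix_mulVec_eq_zero_of_signlessLapMatrix_mulVec_eq hdeg' hQ)
  obtain ⟨w, hw⟩ := Function.ne_iff.mp hx.2
  intro v
  have hv : x v ≠ 0 := hconst w v (hG w v) ▸ hw
  exact Nat.cast_injective (degree_eq_of_signlessLapMatrix_mulVec_eq hdeg' hQ hv)

end SignlessLaplacian

open scoped Classical in
theorem component_regular_of_signless_laplacian_spectral_radius_eq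
    {V : Type*} [Fintype V] (G : SimpleGraph V)
    (n γ : ℕ) (hn : Fintype.card V = n) (hγ : dominationNumber G = γ)
    (hγ1 : 1 ≤ γ) (hγn : γ ≤ n - 1)
    (hrad : Module.End.HasEigenvalue (Matrix.toLin' (signlessLapMatrix G))
      (2 * ((n : ℝ) - γ)))
    (c : G.ConnectedComponent)
    (hedge : ∃ x ∈ c.supp, ∃ y ∈ c.supp, G.Adj x y)
    (hc : Module.End.HasEigenvalue
      (Matrix.toLin' (signlessLapMatrix (G.induce c.supp))) (2 * ((n : ℝ) - γ))) :
    ∀ v : c.supp, (G.induce c.supp).degree v = n - γ := by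
  subst hn hγ
  have hdeg (v : c.supp) :
      (G.induce c.supp).degree v ≤ Fintype.card V - dominationNumber G :=
    calc (G.induce c.supp).degree v ≤ G.degree (v : V) :=
          (Embedding.induce c.supp).toCopy.degree_le v
      _ ≤ Fintype.card V - dominationNumber G :=
          Nat.le_sub_of_add_le (degree_add_dominationNumber_le_card G v)
  rw [← Nat.cast_sub (hγn.trans (Nat.sub_le _ _))] at hc
  exact isRegularOfDegree_of_hasEigenvalue_signlessLapMatrix
    c.connected_toSimpleGraph.preconnected hdeg hc
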